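/- The function B ↦ s_B is continuous on (1,∞); moreover lim_{B→1+} s_B = 1 and lim_{B→∞} s_B = 1/2. -/

import Mathlib

open Filter MeasureTheory Set

/-- The Gauss map `T(x) = 1/x - ⌊1/x⌋`. -/
noncomputable def gaussMap (x : ℝ) : ℝ := 1 / x - (⌊1 / x⌋ : ℤ)

/-- The `n`-th partial quotient `a_n(x)` (for `n ≥ 1`) of the continued
fraction expansion of `x`: `a_n(x) = ⌊1 / T^{n-1}(x)⌋`. -/
noncomputable def pq (x : ℝ) (n : ℕ) : ℕ := ⌊1 / (gaussMap^[n - 1] x)⌋₊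

/-- The continuant `q_n(a_1, …, a_n)`: `q_0 = 1`, `q_1 = a_1`,
`q_k = a_k q_{k-1} + q_{k-2}`. -/
def contQ : (n : ℕ) → (Fin n → ℕ) → ℕ
  | 0, _ => 1
  | 1, a => a 0
  | (n + 2), a =>
      a (Fin.last (n + 1)) * contQ (n + 1) (Fin.init a) +
        contQ n (Fin.init (Fin.init a))

/-- `s_B`: the Wang–Wu pressure exponent. -/
noncomputable def sExp (B : ℝ) : ℝ :=
  sInf {s : ℝ | 0 ≤ s ∧
    Filter.atTop.limsup (fun n : ℕ =>
      (((n : ℝ)⁻¹ : ℝ) : EReal) * ENNReal.log (∑' a : Fin n → ℕ+,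
        ENNReal.ofReal ((B ^ n * ((contQ n fun i => (a i : ℕ)) : ℝ) ^ 2) ^ (-s)))) ≤ 0}

/-- `g_{B₁,B₂}`: the two-parameter pressure exponent. -/
noncomputable def gExp (B₁ B₂ : ℝ) : ℝ :=
  sInf {s : ℝ | 0 ≤ s ∧
    Filter.atTop.limsup (fun n : ℕ =>
      (((n : ℝ)⁻¹ : ℝ) : EReal) * ENNReal.log (∑' a : Fin n → ℕ+,
        ENNReal.ofReal (B₂ ^ ((1 - s) * (n : ℝ)) *
          (B₁ ^ n * ((contQ n fun i => (a i : ℕ)) : ℝ) ^ 2) ^ (-s)))) ≤ 0}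

namespace SExpAux

/-- real continuant on positive tuples -/
noncomputable def Q (n : ℕ) (a : Fin n → ℕ+) : ℝ := (contQ n fun i => (a i : ℕ) : ℝ)

/-- previous continuant -/
noncomputable def Q' : (n : ℕ) → (Fin n → ℕ+) → ℝ
  | 0, _ => 0
  | (n + 1), a => Q n (Fin.init a)

noncomputable def U (B s : ℝ) (n : ℕ) : ENNReal :=
  ∑' a : Fin n → ℕ+, ENNReal.ofReal ((B ^ n * Q n a ^ 2) ^ (-s))

noncomputable def SS (B : ℝ) : Set ℝ := {s : ℝ | 0 ≤ s ∧
    Filter.atTop.limsup (fun n : ℕ =>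
      (((n : ℝ)⁻¹ : ℝ) : EReal) * ENNReal.log (U B s n)) ≤ 0}

lemma sExp_eq (B : ℝ) : sExp B = sInf (SS B) := rfl

lemma Q_zero (a : Fin 0 → ℕ+) : Q 0 a = 1 := by simp [Q, contQ]

lemma Q_snoc (n : ℕ) (a : Fin n → ℕ+) (k : ℕ+) :
    Q (n + 1) (Fin.snoc (α := fun _ => ℕ+) a k) = (k : ℕ) * Q n a + Q' n a := by
  have h : ∀ (m : ℕ) (b : Fin (m + 1) → ℕ+),
      (Fin.init fun i => ((b i : ℕ+) : ℕ)) = fun i => ((Fin.init (α := fun _ => ℕ+) b i : ℕ+) : ℕ) := by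
    intro m b; rfl
  cases n with
  | zero => simp [Q, Q', contQ, Fin.snoc]
  | succ n =>
    simp only [Q, Q', contQ, h, Fin.init_snoc, Fin.snoc_last]
    push_cast
    rfl

lemma Q'_snoc (n : ℕ) (a : Fin n → ℕ+) (k : ℕ+) :
    Q' (n + 1) (Fin.snoc (α := fun _ => ℕ+) a k) = Q n a := by
  simp [Q', Fin.init_snoc]

lemma pcast (k : ℕ+) : (1 : ℝ) ≤ ((k : ℕ) : ℝ) := by exact_mod_cast k.2

lemma snoc_ind (P : (n : ℕ) → (Fin n → ℕ+) → Prop) (h0 : ∀ a, P 0 a)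
    (hs : ∀ n a k, P n a → P (n + 1) (Fin.snoc (α := fun _ => ℕ+) a k)) : ∀ n a, P n a := by
  intro n
  induction n with
  | zero => exact h0
  | succ n ih =>
    intro a
    have := hs n (Fin.init a) (a (Fin.last n)) (ih _)
    rwa [Fin.snoc_init_self] at this

lemma Q_bounds : ∀ n a, 1 ≤ Q n a ∧ 0 ≤ Q' n a ∧ Q' n a ≤ Q n a := by
  apply snoc_ind
  · intro a; simp [Q_zero, Q']
  · intro n a k ⟨h1, h2, h3⟩
    rw [Q_snoc, Q'_snoc]
    have := pcast k
    refine ⟨?_, ?_, ?_⟩ <;> nlinarith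

lemma Q_growth : ∀ n a, (2 : ℝ) ^ n ≤ 2 * Q n a ^ 2 ∧ (2 : ℝ) ^ n ≤ 4 * Q' n a ^ 2 + (if n = 0 then 1 else 0) := by
  apply snoc_ind
  · intro a; simp [Q_zero, Q']
  · intro n a k ⟨h1, h2⟩
    obtain ⟨b1, b2, b3⟩ := Q_bounds n a
    rw [Q_snoc, Q'_snoc]
    have hk := pcast k
    have h4 : Q n a + Q' n a ≤ (k : ℕ) * Q n a + Q' n a := by nlinarith
    have h5 : (Q n a + Q' n a)^2 ≤ ((k : ℕ) * Q n a + Q' n a)^2 := by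
      apply pow_le_pow_left₀ (by linarith) h4
    rw [pow_succ]
    refine ⟨?_, ?_⟩
    · split_ifs at h2 with hn
      · subst hn; rw [pow_zero, one_mul]; nlinarith
      · nlinarith
    · simp; nlinarith

lemma tsum_snoc (n : ℕ) (f : (Fin (n + 1) → ℕ+) → ENNReal) :
    ∑' a, f a = ∑' a : Fin n → ℕ+, ∑' k : ℕ+, f (Fin.snoc (α := fun _ => ℕ+) a k) := by
  rw [← (Fin.snocEquiv (fun _ : Fin (n + 1) => ℕ+)).tsum_eq, ENNReal.tsum_prod', ENNReal.tsum_comm]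
  rfl

lemma tele (q p : ℝ) (hq : 1 ≤ q) (hp : 0 ≤ p) :
    ∑' k : ℕ+, ENNReal.ofReal (1 / (((k : ℕ) * q + p) * (((k : ℕ) * q + p) + q)))
      = ENNReal.ofReal (1 / (q * (q + p))) := by
  rw [tsum_pnat_eq_tsum_succ (f := fun k : ℕ => ENNReal.ofReal (1 / (((k : ℕ) * q + p) * (((k : ℕ) * q + p) + q))))]
  have hnn : ∀ k : ℕ, 0 ≤ 1 / ((((k + 1 : ℕ) : ℝ) * q + p) * ((((k + 1 : ℕ) : ℝ) * q + p) + q)) := by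
    intro k; positivity
  have hs : HasSum (fun k : ℕ => 1 / ((((k + 1 : ℕ) : ℝ) * q + p) * ((((k + 1 : ℕ) : ℝ) * q + p) + q)))
      (1 / (q * (q + p))) := by
    rw [hasSum_iff_tendsto_nat_of_nonneg hnn]
    have key : ∀ n : ℕ, ∑ k ∈ Finset.range n, 1 / ((((k + 1 : ℕ) : ℝ) * q + p) * ((((k + 1 : ℕ) : ℝ) * q + p) + q))
        = 1 / (q * (q + p)) - 1 / (q * ((n + 1) * q + p)) := by
      intro n
      induction n with
      | zero => simp
      | succ n ih =>
        rw [Finset.sum_range_succ, ih]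
        push_cast
        have h1 : ((n : ℝ) + 1) * q + p ≠ 0 := by positivity
        have h2 : ((n : ℝ) + 1 + 1) * q + p ≠ 0 := by positivity
        have h3 : ((n : ℝ) + 1) * q + p + q ≠ 0 := by positivity
        have h4 : q + p ≠ 0 := by positivity
        have h5 : q ≠ 0 := by positivity
        have h6 : ((n : ℝ) + 1) * q + p + q = ((n : ℝ) + 1 + 1) * q + p := by ring
        rw [h6]
        field_simp
        ring
    simp_rw [key]
    have : Tendsto (fun n : ℕ => 1 / (q * (((n : ℝ) + 1) * q + p))) atTop (nhds 0) := by
      simp_rw [one_div]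
      apply Tendsto.inv_tendsto_atTop
      apply Tendsto.const_mul_atTop (by linarith)
      apply tendsto_atTop_add_const_right
      apply Tendsto.atTop_mul_const (by linarith)
      apply tendsto_atTop_add_const_right
      exact tendsto_natCast_atTop_atTop
    simpa using this.const_sub (1 / (q * (q + p)))
  rw [← ENNReal.ofReal_tsum_of_nonneg hnn hs.summable, hs.tsum_eq]

lemma W_sum (n : ℕ) : ∑' a : Fin n → ℕ+, ENNReal.ofReal (1 / (Q n a * (Q n a + Q' n a))) = 1 := by
  induction n with
  | zero => simp [Q_zero, Q', tsum_fintype]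
  | succ n ih =>
    rw [tsum_snoc, ← ih]
    refine tsum_congr fun a => ?_
    simp_rw [Q_snoc, Q'_snoc]
    exact tele _ _ (Q_bounds n a).1 (Q_bounds n a).2.1

lemma base_ge (B : ℝ) (hB : 1 ≤ B) (n a) : 1 ≤ B ^ n * Q n a ^ 2 :=
  one_le_mul_of_one_le_of_one_le (one_le_pow₀ hB) (one_le_pow₀ (Q_bounds n a).1)

lemma limsup_mono {u v : ℕ → ENNReal} (h : ∀ n, u n ≤ v n)
    : atTop.limsup (fun n : ℕ => (((n : ℝ)⁻¹ : ℝ) : EReal) * ENNReal.log (u n)) ≤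
      atTop.limsup (fun n : ℕ => (((n : ℝ)⁻¹ : ℝ) : EReal) * ENNReal.log (v n)) := by
  refine limsup_le_limsup (Eventually.of_forall fun n => ?_)
  refine mul_le_mul_of_nonneg_left (ENNReal.log_monotone (h n)) ?_
  exact_mod_cast (by positivity : (0 : ℝ) ≤ (n : ℝ)⁻¹)

/-- domination -/
lemma mem_of_dom {B B' s t : ℝ} (hB : 1 ≤ B) (hB' : 1 ≤ B') (hs : s ∈ SS B) (hst : s ≤ t)
    (h : s * Real.log B ≤ t * Real.log B') : t ∈ SS B' := by
  refine ⟨hs.1.trans hst, (limsup_mono fun n => ?_).trans hs.2⟩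
  refine ENNReal.tsum_le_tsum fun a => ENNReal.ofReal_le_ofReal ?_
  have hq := (Q_bounds n a).1
  have e : ∀ C : ℝ, 1 ≤ C → Real.log (C ^ n * Q n a ^ 2) = n * Real.log C + 2 * Real.log (Q n a) := by
    intro C hC
    rw [Real.log_mul (by positivity) (by positivity), Real.log_pow, Real.log_pow]; norm_num
  have h1 := base_ge B hB n a
  have h2 := base_ge B' hB' n a
  rw [Real.rpow_def_of_pos (by linarith), Real.rpow_def_of_pos (by linarith), Real.exp_le_exp,
    e _ hB, e _ hB']
  have h3 := Real.log_nonneg hq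
  have h4 : (n : ℝ) * (s * Real.log B) ≤ n * (t * Real.log B') := by gcongr
  nlinarith

lemma mem_of_U_le {B s : ℝ} (C : ℝ) (hC : 0 < C) (hs : 0 ≤ s) (h : ∀ n, U B s n ≤ ENNReal.ofReal C) :
    s ∈ SS B := by
  refine ⟨hs, (limsup_mono h).trans ?_⟩
  have : Tendsto (fun n : ℕ => (((n : ℝ)⁻¹ : ℝ) : EReal) * ENNReal.log (ENNReal.ofReal C)) atTop (nhds 0) := by
    have e : ENNReal.log (ENNReal.ofReal C) = ((Real.log C : ℝ) : EReal) := by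
      rw [ENNReal.log_ofReal, if_neg (not_le.2 hC)]
    simp_rw [e, ← EReal.coe_mul]
    rw [← EReal.coe_zero, EReal.tendsto_coe]
    simpa using tendsto_inv_atTop_nhds_zero_nat (𝕜 := ℝ) |>.mul_const (Real.log C)
  exact this.limsup_eq.le

lemma one_mem {B : ℝ} (hB : 1 ≤ B) : (1 : ℝ) ∈ SS B := by
  refine mem_of_U_le 2 (by norm_num) (by norm_num) fun n => ?_
  calc U B 1 n ≤ ∑' a : Fin n → ℕ+, ENNReal.ofReal 2 * ENNReal.ofReal (1 / (Q n a * (Q n a + Q' n a))) := by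
        refine ENNReal.tsum_le_tsum fun a => ?_
        rw [← ENNReal.ofReal_mul (by norm_num)]
        apply ENNReal.ofReal_le_ofReal
        obtain ⟨b1, b2, b3⟩ := Q_bounds n a
        rw [Real.rpow_neg_one, mul_one_div, inv_eq_one_div, div_le_div_iff₀ (by positivity) (by positivity)]
        have : Q n a ^ 2 ≤ B ^ n * Q n a ^ 2 := le_mul_of_one_le_left (by positivity) (one_le_pow₀ hB)
        nlinarith
    _ = ENNReal.ofReal 2 := by rw [ENNReal.tsum_mul_left, W_sum, mul_one]

lemma U_succ_le {B s : ℝ} (hB : 1 ≤ B) (hs : 0 ≤ s) (n : ℕ) :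
    U B s (n + 1) ≤ (ENNReal.ofReal (B ^ (-s)) * ∑' k : ℕ+, ENNReal.ofReal (((k : ℕ) : ℝ) ^ (-(2 * s)))) * U B s n := by
  rw [U, tsum_snoc, U, ← ENNReal.tsum_mul_left]
  refine ENNReal.tsum_le_tsum fun a => ?_
  rw [mul_comm, ← ENNReal.tsum_mul_left, ← ENNReal.tsum_mul_left]
  refine ENNReal.tsum_le_tsum fun k => ?_
  rw [← ENNReal.ofReal_mul (by positivity), ← ENNReal.ofReal_mul (by positivity)]
  apply ENNReal.ofReal_le_ofReal
  obtain ⟨b1, b2, b3⟩ := Q_bounds n a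
  have hk := pcast k
  have : (((k : ℕ) : ℝ) ^ (-(2 * s))) = (((k : ℕ) : ℝ) ^ 2) ^ (-s) := by
    rw [← Real.rpow_natCast, ← Real.rpow_mul (by positivity)]; norm_num
  rw [this, ← Real.mul_rpow (by positivity) (by positivity), ← Real.mul_rpow (by positivity) (by positivity), Q_snoc]
  apply Real.rpow_le_rpow_of_nonpos (by positivity) _ (by linarith)
  have h1 : ((k : ℕ) * Q n a) ^ 2 ≤ ((k : ℕ) * Q n a + Q' n a) ^ 2 :=
    pow_le_pow_left₀ (by positivity) (by linarith) 2
  calc B ^ n * Q n a ^ 2 * (B * (k : ℕ) ^ 2) = B ^ (n + 1) * ((k : ℕ) * Q n a) ^ 2 := by ring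
    _ ≤ _ := by gcongr

lemma zeta_ne_top {s : ℝ} (hs : 1 / 2 < s) :
    ∑' k : ℕ+, ENNReal.ofReal (((k : ℕ) : ℝ) ^ (-(2 * s))) ≠ ⊤ := by
  have h : Summable (fun k : ℕ => (k : ℝ) ^ (-(2 * s))) := Real.summable_nat_rpow.2 (by linarith)
  have h2 : Summable (fun k : ℕ+ => ((k : ℕ) : ℝ) ^ (-(2 * s))) := h.comp_injective PNat.coe_injective
  exact h2.tsum_ofReal_ne_top

lemma mem_large {s : ℝ} (hs : 1 / 2 < s) : ∀ᶠ B in atTop, s ∈ SS B := by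
  have ht : Tendsto (fun B : ℝ => ENNReal.ofReal (B ^ (-s)) *
      ∑' k : ℕ+, ENNReal.ofReal (((k : ℕ) : ℝ) ^ (-(2 * s)))) atTop (nhds 0) := by
    have h1 : Tendsto (fun B : ℝ => ENNReal.ofReal (B ^ (-s))) atTop (nhds 0) := by
      rw [← ENNReal.ofReal_zero]
      exact ENNReal.tendsto_ofReal (tendsto_rpow_neg_atTop (by linarith))
    simpa using ENNReal.Tendsto.mul_const h1 (Or.inr (zeta_ne_top hs))
  filter_upwards [ht.eventually (Iic_mem_nhds (zero_lt_one (α := ENNReal))), eventually_ge_atTop 1] with B h hB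
  refine mem_of_U_le 1 one_pos (by linarith) fun n => ?_
  rw [ENNReal.ofReal_one]
  induction n with
  | zero => simp [U, Q_zero, tsum_fintype]
  | succ n ih =>
    exact (U_succ_le hB (by linarith) n).trans (mul_le_one' h ih)

lemma harmonic_top : ∑' k : ℕ+, ENNReal.ofReal (1 / ((k : ℕ) : ℝ)) = ⊤ := by
  by_contra h
  rw [tsum_pnat_eq_tsum_succ (f := fun k : ℕ => ENNReal.ofReal (1 / (k : ℝ)))] at h
  have h1 := ENNReal.summable_toReal h
  have h2 : (fun k : ℕ => (ENNReal.ofReal (1 / ((k + 1 : ℕ) : ℝ))).toReal) = fun k : ℕ => 1 / ((k + 1 : ℕ) : ℝ) := by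
    funext k; rw [ENNReal.toReal_ofReal (by positivity)]
  rw [h2] at h1
  exact Real.not_summable_one_div_natCast ((summable_nat_add_iff 1).1 h1)

lemma half_lt {B s : ℝ} (hB : 1 ≤ B) (hs : s ∈ SS B) : 1 / 2 < s := by
  by_contra hlt
  push Not at hlt
  have h0 := hs.1
  have htop : ∀ n, U B s (n + 1) = ⊤ := by
    intro n
    rw [U, tsum_snoc, eq_top_iff]
    refine le_trans ?_ (ENNReal.le_tsum (fun _ => 1))
    set a : Fin n → ℕ+ := fun _ => 1
    obtain ⟨b1, b2, b3⟩ := Q_bounds n a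
    set c : ℝ := (B ^ (n + 1) * (Q n a + Q' n a) ^ 2) ^ (-s)
    have hc : 0 < c := by positivity
    have : ∑' k : ℕ+, ENNReal.ofReal c * ENNReal.ofReal (1 / ((k : ℕ) : ℝ)) = ⊤ := by
      rw [ENNReal.tsum_mul_left, harmonic_top, ENNReal.mul_top]
      simpa using hc
    rw [← this]
    refine ENNReal.tsum_le_tsum fun k => ?_
    have hk := pcast k
    rw [← ENNReal.ofReal_mul hc.le]
    apply ENNReal.ofReal_le_ofReal
    have e1 : 1 / ((k : ℕ) : ℝ) ≤ (((k : ℕ) : ℝ) ^ 2) ^ (-s) := by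
      rw [← Real.rpow_natCast, ← Real.rpow_mul (by positivity), one_div, ← Real.rpow_neg_one]
      apply Real.rpow_le_rpow_of_exponent_le hk
      push_cast; linarith
    calc c * (1 / ((k : ℕ) : ℝ)) ≤ c * (((k : ℕ) : ℝ) ^ 2) ^ (-s) := by gcongr
      _ = (B ^ (n + 1) * (Q n a + Q' n a) ^ 2 * ((k : ℕ) : ℝ) ^ 2) ^ (-s) := by
          rw [Real.mul_rpow (x := B ^ (n + 1) * (Q n a + Q' n a) ^ 2) (by positivity) (by positivity)]
      _ ≤ _ := by
          rw [Q_snoc]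
          apply Real.rpow_le_rpow_of_nonpos (by positivity) _ (by linarith)
          rw [mul_assoc, ← mul_pow]
          gcongr
          nlinarith
  have : atTop.limsup (fun n : ℕ =>
      (((n : ℝ)⁻¹ : ℝ) : EReal) * ENNReal.log (U B s n)) = ⊤ := by
    have hev : (fun n : ℕ => (((n : ℝ)⁻¹ : ℝ) : EReal) * ENNReal.log (U B s n)) =ᶠ[atTop] fun _ => ⊤ := by
      filter_upwards [eventually_ge_atTop 1] with n hn
      obtain ⟨m, rfl⟩ := Nat.exists_eq_add_of_le' hn
      rw [htop, ENNReal.log_top, EReal.coe_mul_top_of_pos (by positivity)]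
    rw [limsup_congr hev, limsup_const]
  have h2 := hs.2
  rw [this] at h2
  simp at h2

lemma not_mem_small {B s : ℝ} (hB : 1 ≤ B) (hs0 : 0 < s) (hs1 : s < 1)
    (h : s * Real.log B < (1 - s) * Real.log 2) : s ∉ SS B := by
  intro hs
  set r : ℝ := (1 - s) * Real.log 2 - s * Real.log B with hr
  have hU : ∀ n : ℕ, ENNReal.ofReal (Real.exp (n * r - (1 - s) * Real.log 2)) ≤ U B s n := by
    intro n
    rw [← mul_one (ENNReal.ofReal _), ← W_sum n, ← ENNReal.tsum_mul_left]
    refine ENNReal.tsum_le_tsum fun a => ?_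
    rw [← ENNReal.ofReal_mul (by positivity)]
    apply ENNReal.ofReal_le_ofReal
    obtain ⟨b1, b2, b3⟩ := Q_bounds n a
    have h1 : 1 / (Q n a * (Q n a + Q' n a)) ≤ Real.exp (- (2 * Real.log (Q n a))) := by
      rw [Real.exp_neg, mul_comm 2, Real.exp_mul, Real.exp_log (by linarith), one_div]
      apply inv_anti₀ (by positivity)
      norm_num
      nlinarith
    refine (mul_le_mul_of_nonneg_left h1 (by positivity)).trans ?_
    rw [← Real.exp_add, Real.rpow_def_of_pos (by positivity), Real.exp_le_exp,
      Real.log_mul (by positivity) (by positivity), Real.log_pow, Real.log_pow]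
    have h2 : n * Real.log 2 ≤ Real.log 2 + 2 * Real.log (Q n a) := by
      have := Real.log_le_log (by positivity) (Q_growth n a).1
      rw [Real.log_pow, Real.log_mul (by norm_num) (by positivity), Real.log_pow] at this
      simpa using this
    push_cast
    have h3 := mul_le_mul_of_nonneg_left h2 (by linarith : 0 ≤ 1 - s)
    rw [hr]
    nlinarith
  have hle := (limsup_mono hU).trans hs.2
  have : Tendsto (fun n : ℕ => (((n : ℝ)⁻¹ : ℝ) : EReal) *
      ENNReal.log (ENNReal.ofReal (Real.exp (n * r - (1 - s) * Real.log 2)))) atTop (nhds (r : EReal)) := by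
    have e : ∀ x : ℝ, ENNReal.log (ENNReal.ofReal (Real.exp x)) = (x : EReal) := by
      intro x
      rw [ENNReal.log_ofReal, if_neg (not_le.2 (Real.exp_pos x)), Real.log_exp]
    simp_rw [e, ← EReal.coe_mul]
    rw [EReal.tendsto_coe]
    have h1 : Tendsto (fun n : ℕ => r - (n : ℝ)⁻¹ * ((1 - s) * Real.log 2)) atTop (nhds r) := by
      simpa using (tendsto_inv_atTop_nhds_zero_nat (𝕜 := ℝ) |>.mul_const ((1 - s) * Real.log 2)).const_sub r
    refine h1.congr' ?_
    filter_upwards [eventually_ge_atTop 1] with n hn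
    have : (n : ℝ) ≠ 0 := by positivity
    field_simp
  rw [this.limsup_eq] at hle
  have : r ≤ 0 := by exact_mod_cast hle
  linarith

lemma bdd (B : ℝ) : BddBelow (SS B) := ⟨0, fun _ h => h.1⟩

lemma sExp_anti {B B' : ℝ} (hB : 1 ≤ B) (h : B ≤ B') : sExp B' ≤ sExp B := by
  rw [sExp_eq, sExp_eq]
  refine le_csInf ⟨1, one_mem hB⟩ fun s hs => csInf_le (bdd _) ?_
  refine mem_of_dom hB (hB.trans h) hs le_rfl ?_
  exact mul_le_mul_of_nonneg_left (Real.log_le_log (by linarith) h) hs.1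

lemma sExp_log_mono {B B' : ℝ} (hB : 1 < B) (h : B ≤ B') :
    sExp B * Real.log B ≤ sExp B' * Real.log B' := by
  have hl := Real.log_pos hB
  have hl' := Real.log_pos (hB.trans_le h)
  have hll := Real.log_le_log (by linarith) h
  rw [← div_le_iff₀ hl']
  rw [sExp_eq B']
  refine le_csInf ⟨1, one_mem (hB.le.trans h)⟩ fun s hs => ?_
  rw [div_le_iff₀ hl', ← le_div_iff₀ hl, sExp_eq]
  refine csInf_le (bdd _) (mem_of_dom (hB.le.trans h) hB.le hs ?_ ?_)
  · rw [le_div_iff₀ hl]; exact mul_le_mul_of_nonneg_left hll hs.1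
  · rw [div_mul_cancel₀ _ hl.ne']

lemma sExp_le_one {B : ℝ} (hB : 1 ≤ B) : sExp B ≤ 1 := csInf_le (bdd _) (one_mem hB)

lemma half_le {B : ℝ} (hB : 1 ≤ B) : 1 / 2 ≤ sExp B :=
  le_csInf ⟨1, one_mem hB⟩ fun _ hs => (half_lt hB hs).le

lemma le_sExp {B s : ℝ} (hB : 1 ≤ B) (hs : s ∉ SS B) : s ≤ sExp B := by
  rw [sExp_eq]
  refine le_csInf ⟨1, one_mem hB⟩ fun t ht => ?_
  by_contra hlt
  push Not at hlt
  exact hs (mem_of_dom hB hB ht hlt.le (mul_le_mul_of_nonneg_right hlt.le (Real.log_nonneg hB)))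

end SExpAux

open SExpAux in
theorem sExp_continuous_and_limits :
    ContinuousOn sExp (Set.Ioi (1 : ℝ)) ∧
    Filter.Tendsto sExp (nhdsWithin 1 (Set.Ioi (1 : ℝ))) (nhds 1) ∧
    Filter.Tendsto sExp Filter.atTop (nhds (1 / 2)) := by
  refine ⟨?_, ?_, ?_⟩
  · intro B hB
    have hB : 1 < B := hB
    apply ContinuousAt.continuousWithinAt
    have hl := Real.log_pos hB
    have hg : Tendsto (fun C => sExp B * Real.log B / Real.log C) (nhds B) (nhds (sExp B)) := by
      have h1 : Tendsto Real.log (nhds B) (nhds (Real.log B)) :=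
        Real.continuousAt_log (by linarith)
      have := (tendsto_const_nhds (x := sExp B * Real.log B) (f := nhds B)).div h1 hl.ne'
      rwa [mul_div_cancel_right₀ _ hl.ne'] at this
    have hmin := (tendsto_const_nhds (x := sExp B) (f := nhds B)).min hg
    have hmax := (tendsto_const_nhds (x := sExp B) (f := nhds B)).max hg
    rw [min_self] at hmin
    rw [max_self] at hmax
    refine tendsto_of_tendsto_of_tendsto_of_le_of_le' hmin hmax ?_ ?_
    · filter_upwards [lt_mem_nhds hB] with C hC
      rcases le_total C B with h | h
      · exact (min_le_left _ _).trans (sExp_anti hC.le h)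
      · refine (min_le_right _ _).trans ?_
        rw [div_le_iff₀ (Real.log_pos hC)]
        exact sExp_log_mono hB h
    · filter_upwards [lt_mem_nhds hB] with C hC
      rcases le_total C B with h | h
      · refine le_trans ?_ (le_max_right _ _)
        rw [le_div_iff₀ (Real.log_pos hC)]
        exact sExp_log_mono hC h
      · exact (sExp_anti hB.le h).trans (le_max_left _ _)
  · rw [tendsto_order]
    refine ⟨fun x hx => ?_, fun x hx => ?_⟩
    · obtain ⟨s, hs, hs1⟩ := exists_between (max_lt hx one_pos)
      obtain ⟨hxs, hs0⟩ := max_lt_iff.1 hs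
      have h1 : Tendsto (fun C => s * Real.log C) (nhds 1) (nhds 0) := by
        have : Tendsto Real.log (nhds 1) (nhds (Real.log 1)) :=
          Real.continuousAt_log one_ne_zero
        simpa using this.const_mul s
      have h2 : 0 < (1 - s) * Real.log 2 := mul_pos (by linarith) (Real.log_pos (by norm_num))
      filter_upwards [self_mem_nhdsWithin, nhdsWithin_le_nhds (h1.eventually (gt_mem_nhds h2))] with B hB hBl
      have hB : 1 < B := hB
      exact hxs.trans_le (le_sExp hB.le (not_mem_small hB.le hs0 hs1 hBl))
    · filter_upwards [self_mem_nhdsWithin] with B hB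
      exact (sExp_le_one (le_of_lt hB)).trans_lt hx
  · rw [tendsto_order]
    refine ⟨fun x hx => ?_, fun x hx => ?_⟩
    · filter_upwards [eventually_ge_atTop 1] with B hB
      exact hx.trans_le (half_le hB)
    · obtain ⟨s, hs, hs1⟩ := exists_between hx
      filter_upwards [mem_large hs] with B hB
      exact (csInf_le (bdd B) hB).trans_lt hs1
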